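/- Fix a proper face γ of Γ. Then the map ε ↦ σ̄(ε) is a bijection from the set of faces of Γ that contain γ onto the set of faces of the closed convex cone σ̄(γ). -/

import Mathlib

/-!
Write `γ_a` for `faceAt S a`. For a face `γ`, the closed cone of `γ` is
`{a ≥ 0 | γ ⊆ γ_a}` (`mem_sigmaConeCl`): this set is closed, and conversely if `γ = γ_{a₀}` and
`γ ⊆ γ_a`, then `a + t a₀` has face `γ_a ∩ γ_{a₀} = γ` for every `t > 0`. Injectivity follows at
once, since `e` lies in the closed cone of `γ_e`.

The inclusion `γ_x ⊆ γ_y` is a finite condition: every `α ∈ S` on `γ_x` lies on `γ_y`, and every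
vanishing coordinate of `x` vanishes in `y` (`faceAt_subset_iff`). It implies that `x - t y` is
still nonnegative, and still minimal on `Γ` at any common point of `γ_x` and `γ_y`, for small
`t > 0` (`exists_perturb`).

If `ε = γ_e ⊇ γ` and `q ∈ γ`, the form
`a ↦ ∑_{α ∈ S ∩ ε} ⟨a, α - q⟩ + ∑_{e_i = 0} a_i` is nonnegative on the cone of `γ` and vanishes
there exactly on the cone of `ε`. Conversely, a face `F` cut out by a form `λ` is closed under
addition, and `γ_{x+y} = γ_x ∩ γ_y` on the cone of `γ`, so some `x ∈ F` has `γ_x` smallest. Then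
`F` is the cone of `γ_x`: if `γ_x ⊆ γ_y`, then `x - t y` is in the cone of `γ`, whence
`0 ≤ λ(x - t y) = -t λ(y)` and `λ(y) = 0`.
-/

open Finset Set Pointwise

noncomputable section

/-- Standard inner product on `ℝ^n`. -/
def dotR {n : ℕ} (a b : Fin n → ℝ) : ℝ := ∑ i, a i * b i

/-- The nonnegative orthant `ℝ_{≥0}^n`. -/
def nonnegOrthant (n : ℕ) : Set (Fin n → ℝ) := {x | ∀ i, 0 ≤ x i}

/-- Coercion of an integer lattice point to `ℝ^n`. -/
def natCastVec {n : ℕ} (α : Fin n → ℕ) : Fin n → ℝ := fun i => (α i : ℝ)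

/-- The Newton polyhedron of a finite set `S ⊆ ℕ^n`: the convex hull of `S + ℝ_{≥0}^n`. -/
def newtonPolyhedron {n : ℕ} (S : Finset (Fin n → ℕ)) : Set (Fin n → ℝ) :=
  convexHull ℝ {x | ∃ α ∈ S, ∃ v ∈ nonnegOrthant n, x = natCastVec α + v}

/-- `l_Γ(a) = inf {⟨a,b⟩ : b ∈ Γ}`. -/
def lGamma {n : ℕ} (S : Finset (Fin n → ℕ)) (a : Fin n → ℝ) : ℝ :=
  sInf ((fun b => dotR a b) '' newtonPolyhedron S)

/-- `γ_a = {b ∈ Γ : ⟨a,b⟩ = l_Γ(a)}`. -/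
def faceAt {n : ℕ} (S : Finset (Fin n → ℕ)) (a : Fin n → ℝ) : Set (Fin n → ℝ) :=
  {b ∈ newtonPolyhedron S | dotR a b = lGamma S a}

/-- A face of `Γ` is a set of the form `γ_a` with `a ∈ ℝ_{≥0}^n`. -/
def IsFaceOf {n : ℕ} (S : Finset (Fin n → ℕ)) (γ : Set (Fin n → ℝ)) : Prop :=
  ∃ a ∈ nonnegOrthant n, γ = faceAt S a

/-- A proper face is a face different from `Γ`. -/
def IsProperFaceOf {n : ℕ} (S : Finset (Fin n → ℕ)) (γ : Set (Fin n → ℝ)) : Prop :=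
  IsFaceOf S γ ∧ γ ≠ newtonPolyhedron S

/-- `σ(γ) = {a ∈ ℝ_{≥0}^n : γ_a = γ}`. -/
def sigmaCone {n : ℕ} (S : Finset (Fin n → ℕ)) (γ : Set (Fin n → ℝ)) : Set (Fin n → ℝ) :=
  {a ∈ nonnegOrthant n | faceAt S a = γ}

/-- `σ̄(γ)`, the closure of `σ(γ)` in `ℝ^n`. -/
def sigmaConeCl {n : ℕ} (S : Finset (Fin n → ℕ)) (γ : Set (Fin n → ℝ)) : Set (Fin n → ℝ) :=
  closure (sigmaCone S γ)

/-- `F` is a face of the closed convex cone `C`: `F = {x ∈ C | λ x = 0}` for a linear form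
`λ` nonnegative on `C`. -/
def IsConeFaceOf {n : ℕ} (C F : Set (Fin n → ℝ)) : Prop :=
  ∃ lam : (Fin n → ℝ) →ₗ[ℝ] ℝ, (∀ x ∈ C, 0 ≤ lam x) ∧ F = {x ∈ C | lam x = 0}

/-- The dimension of a subset of `ℝ^n`: the dimension of its affine span. -/
def dimSet {n : ℕ} (s : Set (Fin n → ℝ)) : ℕ :=
  Module.finrank ℝ (affineSpan ℝ s).direction

/-- `ℝ_{≥0}^I = {x ∈ ℝ_{≥0}^n : x_i = 0 for i ∉ I}`. -/
def orthantOn (n : ℕ) (I : Set (Fin n)) : Set (Fin n → ℝ) :=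
  {x | (∀ i, 0 ≤ x i) ∧ ∀ i ∉ I, x i = 0}

/-- `ℝ_{≥0}^{n₁} × ℝ_{>0}^{n₂} = {a ∈ ℝ_{≥0}^n : a_i > 0 for i > n₁}`. -/
def mixedOrthant (n n₁ : ℕ) : Set (Fin n → ℝ) :=
  {x | (∀ i, 0 ≤ x i) ∧ ∀ i : Fin n, n₁ ≤ (i : ℕ) → 0 < x i}

open scoped Topology

variable {n : ℕ} {S : Finset (Fin n → ℕ)}

/-! ### The inner product -/

lemma dotR_add_left (a b c : Fin n → ℝ) : dotR (a + b) c = dotR a c + dotR b c :=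
  add_dotProduct a b c

lemma dotR_add_right (a b c : Fin n → ℝ) : dotR a (b + c) = dotR a b + dotR a c :=
  dotProduct_add a b c

lemma dotR_sub_left (a b c : Fin n → ℝ) : dotR (a - b) c = dotR a c - dotR b c :=
  sub_dotProduct a b c

lemma dotR_smul_left (t : ℝ) (a c : Fin n → ℝ) : dotR (t • a) c = t * dotR a c :=
  smul_dotProduct t a c

lemma dotR_smul_right (t : ℝ) (a c : Fin n → ℝ) : dotR a (t • c) = t * dotR a c :=
  dotProduct_smul t a c

lemma dotR_single (a : Fin n → ℝ) (i : Fin n) : dotR a (Pi.single i 1) = a i := by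
  simp [dotR, Pi.single_apply]

lemma continuous_dotR_left (b : Fin n → ℝ) : Continuous fun a => dotR a b := by
  unfold dotR; fun_prop

lemma dotR_nonneg {a v : Fin n → ℝ} (ha : a ∈ nonnegOrthant n) (hv : v ∈ nonnegOrthant n) :
    0 ≤ dotR a v :=
  Finset.sum_nonneg fun i _ => mul_nonneg (ha i) (hv i)

/-! ### Faces as sets of minimizers -/

lemma natCastVec_add_mem {α : Fin n → ℕ} (hα : α ∈ S) {v : Fin n → ℝ}
    (hv : v ∈ nonnegOrthant n) : natCastVec α + v ∈ newtonPolyhedron S :=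
  subset_convexHull ℝ _ ⟨α, hα, v, hv, rfl⟩

lemma natCastVec_mem {α : Fin n → ℕ} (hα : α ∈ S) : natCastVec α ∈ newtonPolyhedron S := by
  simpa using natCastVec_add_mem hα (v := 0) fun _ => le_rfl

/-- A lower bound for `⟨a, ·⟩` on `S` holds on the whole Newton polyhedron when `a ≥ 0`. -/
lemma le_dotR_of_forall {a : Fin n → ℝ} (ha : a ∈ nonnegOrthant n) {m : ℝ}
    (h : ∀ α ∈ S, m ≤ dotR a (natCastVec α)) {b : Fin n → ℝ} (hb : b ∈ newtonPolyhedron S) :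
    m ≤ dotR a b := by
  have hconv : Convex ℝ {b | m ≤ dotR a b} :=
    convex_halfSpace_ge ⟨fun x y => dotR_add_right a x y, fun t x => dotR_smul_right t a x⟩ m
  refine convexHull_min ?_ hconv hb
  rintro _ ⟨α, hα, v, hv, rfl⟩
  have := dotR_nonneg ha hv
  have := h α hα
  simp only [mem_ofPred_eq, dotR_add_right]
  linarith

/-- The infimum `l_Γ(a)` is attained at a point of `S`. -/
lemma exists_isLeast (hS : S.Nonempty) {a : Fin n → ℝ} (ha : a ∈ nonnegOrthant n) :
    ∃ α ∈ S, dotR a (natCastVec α) = lGamma S a ∧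
      ∀ b ∈ newtonPolyhedron S, lGamma S a ≤ dotR a b := by
  obtain ⟨α, hα, hmin⟩ := S.exists_min_image (fun α => dotR a (natCastVec α)) hS
  have h : IsLeast ((fun b => dotR a b) '' newtonPolyhedron S) (dotR a (natCastVec α)) := by
    refine ⟨⟨_, natCastVec_mem hα, rfl⟩, ?_⟩
    rintro _ ⟨b, hb, rfl⟩
    exact le_dotR_of_forall ha hmin hb
  have hl : lGamma S a = dotR a (natCastVec α) := h.csInf_eq
  exact ⟨α, hα, hl.symm, fun b hb => hl ▸ h.2 ⟨b, hb, rfl⟩⟩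

/-- For `a ≥ 0`, the face `γ_a` is the set of minimizers of `⟨a, ·⟩` on `Γ`. -/
lemma mem_faceAt (hS : S.Nonempty) {a : Fin n → ℝ} (ha : a ∈ nonnegOrthant n)
    {b : Fin n → ℝ} :
    b ∈ faceAt S a ↔ b ∈ newtonPolyhedron S ∧ ∀ c ∈ newtonPolyhedron S, dotR a b ≤ dotR a c := by
  obtain ⟨α, hα, hl, hmin⟩ := exists_isLeast hS ha
  refine and_congr_right fun hb => ⟨fun h c hc => h.trans_le (hmin c hc), fun h => ?_⟩
  exact le_antisymm ((h _ (natCastVec_mem hα)).trans_eq hl) (hmin b hb)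

lemma exists_natCastVec_mem_faceAt (hS : S.Nonempty) {a : Fin n → ℝ}
    (ha : a ∈ nonnegOrthant n) : ∃ α ∈ S, natCastVec α ∈ faceAt S a := by
  obtain ⟨α, hα, hl, -⟩ := exists_isLeast hS ha
  exact ⟨α, hα, natCastVec_mem hα, hl⟩

lemma add_mem_nonnegOrthant {a b : Fin n → ℝ} (ha : a ∈ nonnegOrthant n)
    (hb : b ∈ nonnegOrthant n) : a + b ∈ nonnegOrthant n :=
  fun i => add_nonneg (ha i) (hb i)

lemma smul_mem_nonnegOrthant {a : Fin n → ℝ} (ha : a ∈ nonnegOrthant n) {t : ℝ} (ht : 0 ≤ t) :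
    t • a ∈ nonnegOrthant n :=
  fun i => mul_nonneg ht (ha i)

lemma faceAt_smul (hS : S.Nonempty) {a : Fin n → ℝ} (ha : a ∈ nonnegOrthant n) {t : ℝ}
    (ht : 0 < t) : faceAt S (t • a) = faceAt S a := by
  ext b
  rw [mem_faceAt hS ha, mem_faceAt hS (smul_mem_nonnegOrthant ha ht.le)]
  simp only [dotR_smul_left, mul_le_mul_iff_right₀ ht]

/-- If `γ_a` and `γ_b` meet, then their intersection is `γ_{a+b}`. -/
lemma faceAt_add (hS : S.Nonempty) {a b q : Fin n → ℝ} (ha : a ∈ nonnegOrthant n)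
    (hb : b ∈ nonnegOrthant n) (hqa : q ∈ faceAt S a) (hqb : q ∈ faceAt S b) :
    faceAt S (a + b) = faceAt S a ∩ faceAt S b := by
  have hq := hqa.1
  rw [mem_faceAt hS ha] at hqa
  rw [mem_faceAt hS hb] at hqb
  ext c
  rw [mem_inter_iff, mem_faceAt hS ha, mem_faceAt hS hb,
    mem_faceAt hS (add_mem_nonnegOrthant ha hb)]
  simp only [dotR_add_left]
  constructor
  · rintro ⟨hc, h⟩
    have h1 := hqa.2 c hc
    have h2 := hqb.2 c hc
    have h3 := h q hq
    exact ⟨⟨hc, fun d hd => by linarith [hqa.2 d hd]⟩, ⟨hc, fun d hd => by linarith [hqb.2 d hd]⟩⟩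
  · rintro ⟨⟨hc, h1⟩, -, h2⟩
    exact ⟨hc, fun d hd => add_le_add (h1 d hd) (h2 d hd)⟩

/-! ### Inclusion of faces -/

lemma eventually_sub_mul_nonneg {u w : ℝ} (hu : 0 ≤ u) (h : u = 0 → w = 0) :
    ∀ᶠ t in 𝓝[>] (0 : ℝ), 0 ≤ u - t * w := by
  rcases hu.eq_or_lt with h0 | h0
  · simp [h h0.symm, ← h0]
  · have hc : Filter.Tendsto (fun t : ℝ => u - t * w) (𝓝[>] 0) (𝓝 (u - 0 * w)) :=
      (Continuous.tendsto (by fun_prop) 0).mono_left nhdsWithin_le_nhds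
    exact (hc.eventually (lt_mem_nhds (by simpa using h0))).mono fun t ht => ht.le

/-- If the points of `S` on `γ_x` lie on `γ_y` and the vanishing coordinates of `x` vanish in
`y`, then for some `t > 0` the vector `x - t y` is nonnegative and minimal on `Γ` at all common
points of `γ_x` and `γ_y`. -/
lemma exists_perturb (hS : S.Nonempty) {x y : Fin n → ℝ} (hx : x ∈ nonnegOrthant n)
    (hA : ∀ α ∈ S, natCastVec α ∈ faceAt S x → natCastVec α ∈ faceAt S y)
    (hI : ∀ i, x i = 0 → y i = 0) :
    ∃ t : ℝ, 0 < t ∧ x - t • y ∈ nonnegOrthant n ∧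
      ∀ q ∈ faceAt S x ∩ faceAt S y, ∀ b ∈ newtonPolyhedron S,
        dotR (x - t • y) q ≤ dotR (x - t • y) b := by
  have h1 : ∀ᶠ t in 𝓝[>] (0 : ℝ), ∀ i, 0 ≤ x i - t * y i :=
    Filter.eventually_all.2 fun i => eventually_sub_mul_nonneg (hx i) (hI i)
  have h2 : ∀ᶠ t in 𝓝[>] (0 : ℝ), ∀ α ∈ S, 0 ≤ (dotR x (natCastVec α) - lGamma S x) -
      t * (dotR y (natCastVec α) - lGamma S y) := by
    refine (Finset.eventually_all S).2 fun α hα => eventually_sub_mul_nonneg ?_ fun h => ?_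
    · obtain ⟨_, -, -, hmin⟩ := exists_isLeast hS hx
      exact sub_nonneg.2 (hmin _ (natCastVec_mem hα))
    · exact sub_eq_zero.2 (hA α hα ⟨natCastVec_mem hα, sub_eq_zero.1 h⟩).2
  obtain ⟨t, ⟨h1, h2⟩, ht⟩ := ((h1.and h2).and self_mem_nhdsWithin).exists
  have hnn : x - t • y ∈ nonnegOrthant n := fun i => by simpa using h1 i
  refine ⟨t, ht, hnn, fun q hq b hb => le_dotR_of_forall hnn (fun α hα => ?_) hb⟩
  have := h2 α hα
  rw [dotR_sub_left, dotR_sub_left, dotR_smul_left, dotR_smul_left, hq.1.2, hq.2.2]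
  linarith

/-- Inclusion of faces is detected by the points of `S` and the recession directions. -/
lemma faceAt_subset_iff (hS : S.Nonempty) {x y : Fin n → ℝ} (hx : x ∈ nonnegOrthant n)
    (hy : y ∈ nonnegOrthant n) :
    faceAt S x ⊆ faceAt S y ↔
      (∀ α ∈ S, natCastVec α ∈ faceAt S x → natCastVec α ∈ faceAt S y) ∧
        ∀ i, x i = 0 → y i = 0 := by
  obtain ⟨α, hα, hαx⟩ := exists_natCastVec_mem_faceAt hS hx
  constructor
  · refine fun h => ⟨fun β _ hβ => h hβ, fun i hi => ?_⟩
    -- The ray `α + ℝ_{≥0} e_i` lies on `γ_x`, so `⟨y, ·⟩` is constant along it.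
    have hmem : natCastVec α + Pi.single i 1 ∈ faceAt S x := by
      refine ⟨natCastVec_add_mem hα fun j => ?_, ?_⟩
      · by_cases hj : j = i
        · subst hj; simp
        · simp [hj]
      · rw [dotR_add_right, dotR_single, hi, add_zero, hαx.2]
    have h1 := (h hmem).2
    have h2 := (h hαx).2
    rw [dotR_add_right, dotR_single, h2] at h1
    linarith
  · rintro ⟨hA, hI⟩ b hb
    obtain ⟨t, ht, -, hmin⟩ := exists_perturb hS hx hA hI
    have hαy := hA α hα hαx
    -- Minimality at `α` forces `⟨y, b⟩ ≤ l_Γ(y)`, because `⟨x, b⟩ = ⟨x, α⟩`.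
    have h := hmin _ ⟨hαx, hαy⟩ b hb.1
    simp only [dotR_sub_left, dotR_smul_left, hαx.2, hb.2] at h
    have hle : dotR y b ≤ dotR y (natCastVec α) := le_of_mul_le_mul_left (by linarith) ht
    rw [mem_faceAt hS hy] at hαy ⊢
    exact ⟨hb.1, fun c hc => hle.trans (hαy.2 c hc)⟩

/-! ### Closed cones of faces -/

/-- The closed cone of a face `γ` consists of all `a ≥ 0` whose face contains `γ`. -/
lemma mem_sigmaConeCl (hS : S.Nonempty) {γ : Set (Fin n → ℝ)} (hγ : IsFaceOf S γ)
    {a : Fin n → ℝ} :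
    a ∈ sigmaConeCl S γ ↔ a ∈ nonnegOrthant n ∧ γ ⊆ faceAt S a := by
  obtain ⟨a₀, ha₀, rfl⟩ := hγ
  constructor
  · intro h
    have hcl : IsClosed {a : Fin n → ℝ | (∀ i, 0 ≤ a i) ∧
        ∀ b ∈ faceAt S a₀, ∀ c ∈ newtonPolyhedron S, dotR a b ≤ dotR a c} := by
      simp only [ofPred_and, ofPred_forall]
      refine IsClosed.inter (isClosed_iInter fun i => isClosed_le (by fun_prop) (by fun_prop))
        (isClosed_iInter fun b => isClosed_iInter fun _ => isClosed_iInter fun c =>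
          isClosed_iInter fun _ => isClosed_le (continuous_dotR_left b) (continuous_dotR_left c))
    have hsub := closure_minimal (s := sigmaCone S (faceAt S a₀)) ?_ hcl h
    · exact ⟨hsub.1, fun b hb => (mem_faceAt hS hsub.1).2 ⟨hb.1, hsub.2 b hb⟩⟩
    · rintro x ⟨hx, hxe⟩
      exact ⟨hx, fun b hb => ((mem_faceAt hS hx).1 (hxe ▸ hb)).2⟩
  · rintro ⟨ha, hsub⟩
    have hlim : Filter.Tendsto (fun t : ℝ => a + t • a₀) (𝓝[>] 0) (𝓝 a) := by
      have : Filter.Tendsto (fun t : ℝ => a + t • a₀) (𝓝[>] 0) (𝓝 (a + (0 : ℝ) • a₀)) :=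
        (Continuous.tendsto (by fun_prop) 0).mono_left nhdsWithin_le_nhds
      simpa using this
    refine mem_closure_of_tendsto hlim ?_
    filter_upwards [self_mem_nhdsWithin] with t ht
    have ht0 : 0 < t := ht
    have hta := smul_mem_nonnegOrthant ha₀ ht0.le
    obtain ⟨α, -, hα⟩ := exists_natCastVec_mem_faceAt hS ha₀
    refine ⟨add_mem_nonnegOrthant ha hta, ?_⟩
    rw [faceAt_add hS ha hta (hsub hα) (by rwa [faceAt_smul hS ha₀ ht0]),
      faceAt_smul hS ha₀ ht0]
    exact inter_eq_right.2 hsub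

/-! ### Faces of the closed cone -/

/-- The closed cone of a face `ε ⊇ γ` is a face of the closed cone of `γ`. -/
lemma isConeFaceOf_sigmaConeCl (hS : S.Nonempty) {γ ε : Set (Fin n → ℝ)} (hγ : IsFaceOf S γ)
    (hε : IsFaceOf S ε) (hsub : γ ⊆ ε) :
    IsConeFaceOf (sigmaConeCl S γ) (sigmaConeCl S ε) := by
  classical
  obtain ⟨q, hq⟩ : γ.Nonempty := by
    obtain ⟨a, ha, rfl⟩ := hγ
    obtain ⟨α, -, hα⟩ := exists_natCastVec_mem_faceAt hS ha
    exact ⟨_, hα⟩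
  have hε' := hε
  obtain ⟨e, he, rfl⟩ := hε'
  let lam : (Fin n → ℝ) →ₗ[ℝ] ℝ :=
    { toFun := fun a =>
        ∑ α ∈ S with natCastVec α ∈ faceAt S e, (dotR a (natCastVec α) - dotR a q) +
          ∑ i with e i = 0, a i
      map_add' := fun a b => by
        simp only [dotR_add_left, Pi.add_apply, Finset.sum_add_distrib, Finset.sum_sub_distrib]
        ring
      map_smul' := fun t a => by
        simp only [dotR_smul_left, Pi.smul_apply, smul_eq_mul, ← mul_sub, ← Finset.mul_sum,
          RingHom.id_apply, mul_add] }
  have hlam : ∀ a, lam a =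
      ∑ α ∈ S with natCastVec α ∈ faceAt S e, (dotR a (natCastVec α) - dotR a q) +
        ∑ i with e i = 0, a i := fun _ => rfl
  have hterm : ∀ a ∈ sigmaConeCl S γ, ∀ α ∈ S.filter (natCastVec · ∈ faceAt S e),
      0 ≤ dotR a (natCastVec α) - dotR a q := by
    intro a ha α hα
    rw [mem_sigmaConeCl hS hγ] at ha
    exact sub_nonneg.2 (((mem_faceAt hS ha.1).1 (ha.2 hq)).2 _
      (natCastVec_mem (Finset.mem_filter.1 hα).1))
  have hcoord : ∀ a ∈ sigmaConeCl S γ, ∀ i ∈ Finset.univ.filter (e · = 0), 0 ≤ a i :=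
    fun a ha i _ => ((mem_sigmaConeCl hS hγ).1 ha).1 i
  refine ⟨lam, fun a ha => ?_, ?_⟩
  · exact add_nonneg (Finset.sum_nonneg (hterm a ha)) (Finset.sum_nonneg (hcoord a ha))
  · ext a
    constructor
    · intro ha
      rw [mem_sigmaConeCl hS hε] at ha
      refine ⟨(mem_sigmaConeCl hS hγ).2 ⟨ha.1, hsub.trans ha.2⟩, ?_⟩
      rw [hlam, Finset.sum_eq_zero, Finset.sum_eq_zero, add_zero]
      · intro i hi
        exact ((faceAt_subset_iff hS he ha.1).1 ha.2).2 i (Finset.mem_filter.1 hi).2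
      · intro α hα
        rw [(ha.2 (Finset.mem_filter.1 hα).2).2, (ha.2 (hsub hq)).2, sub_self]
    · rintro ⟨ha, h0⟩
      rw [hlam, add_eq_zero_iff_of_nonneg (Finset.sum_nonneg (hterm a ha))
        (Finset.sum_nonneg (hcoord a ha)), Finset.sum_eq_zero_iff_of_nonneg (hterm a ha),
        Finset.sum_eq_zero_iff_of_nonneg (hcoord a ha)] at h0
      rw [mem_sigmaConeCl hS hγ] at ha
      refine (mem_sigmaConeCl hS hε).2 ⟨ha.1, (faceAt_subset_iff hS he ha.1).2 ⟨?_, ?_⟩⟩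
      · intro α hα hαe
        refine ⟨natCastVec_mem hα, ?_⟩
        rw [sub_eq_zero.1 (h0.1 α (Finset.mem_filter.2 ⟨hα, hαe⟩)), (ha.2 hq).2]
      · exact fun i hi => h0.2 i (Finset.mem_filter.2 ⟨Finset.mem_univ i, hi⟩)

/-- A nonempty set of nonnegative vectors closed under addition, all of whose faces share a
point, contains an element with smallest face. -/
lemma exists_faceAt_subset (hS : S.Nonempty) {F : Set (Fin n → ℝ)} (hne : F.Nonempty)
    (hF : F ⊆ nonnegOrthant n) (hadd : ∀ x ∈ F, ∀ y ∈ F, x + y ∈ F) {q : Fin n → ℝ}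
    (hq : ∀ x ∈ F, q ∈ faceAt S x) :
    ∃ x ∈ F, ∀ y ∈ F, faceAt S x ⊆ faceAt S y := by
  classical
  let A : (Fin n → ℝ) → Finset (Fin n → ℕ) := fun x => S.filter (natCastVec · ∈ faceAt S x)
  let I : (Fin n → ℝ) → Finset (Fin n) := fun x => Finset.univ.filter (x · = 0)
  -- By `faceAt_subset_iff` the face of `x` is controlled by the finite sets `A x` and `I x`.
  let f : (Fin n → ℝ) → ℕ := fun x => (A x).card + (I x).card
  let x := Function.argminOn f F hne
  have hx : x ∈ F := Function.argminOn_mem f F hne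
  refine ⟨x, hx, fun y hy => ?_⟩
  have hmin : f x ≤ f (x + y) := Function.argminOn_le f F (hadd x hx y hy)
  have hface := faceAt_add hS (hF hx) (hF hy) (hq x hx) (hq y hy)
  have hA : A (x + y) ⊆ A x := fun α hα => by
    simp only [A, Finset.mem_filter, hface] at hα ⊢
    exact ⟨hα.1, hα.2.1⟩
  have hI : I (x + y) ⊆ I x := fun i hi => by
    simp only [I, Finset.mem_filter, Finset.mem_univ, true_and, Pi.add_apply] at hi ⊢
    linarith [hF hx i, hF hy i]
  have hA' := Finset.card_le_card hA
  have hI' := Finset.card_le_card hI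
  have hf : (A x).card + (I x).card ≤ (A (x + y)).card + (I (x + y)).card := hmin
  have hAe := Finset.eq_of_subset_of_card_le hA (by omega)
  have hIe := Finset.eq_of_subset_of_card_le hI (by omega)
  refine (faceAt_subset_iff hS (hF hx) (hF hy)).2 ⟨fun α hα hαx => ?_, fun i hi => ?_⟩
  · have : α ∈ A (x + y) := hAe ▸ Finset.mem_filter.2 ⟨hα, hαx⟩
    exact (hface ▸ (Finset.mem_filter.1 this).2).2
  · have : i ∈ I (x + y) := hIe ▸ Finset.mem_filter.2 ⟨Finset.mem_univ i, hi⟩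
    have : x i + y i = 0 := (Finset.mem_filter.1 this).2
    linarith

/-- Every face of the closed cone of `γ` is the closed cone of a face of `Γ` containing `γ`. -/
lemma exists_sigmaConeCl_eq (hS : S.Nonempty) {γ F : Set (Fin n → ℝ)} (hγ : IsFaceOf S γ)
    (hF : IsConeFaceOf (sigmaConeCl S γ) F) :
    ∃ ε, (IsFaceOf S ε ∧ γ ⊆ ε) ∧ sigmaConeCl S ε = F := by
  obtain ⟨q, hq⟩ : γ.Nonempty := by
    obtain ⟨a, ha, rfl⟩ := hγ
    obtain ⟨α, -, hα⟩ := exists_natCastVec_mem_faceAt hS ha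
    exact ⟨_, hα⟩
  have hγΓ : γ ⊆ newtonPolyhedron S := by
    obtain ⟨a, ha, rfl⟩ := hγ
    exact fun b hb => hb.1
  obtain ⟨lam, hlam, rfl⟩ := hF
  have hcone : ∀ x ∈ sigmaConeCl S γ, x ∈ nonnegOrthant n ∧ γ ⊆ faceAt S x :=
    fun x hx => (mem_sigmaConeCl hS hγ).1 hx
  have h0 : (0 : Fin n → ℝ) ∈ nonnegOrthant n := fun _ => le_rfl
  obtain ⟨x, ⟨hx, hx0⟩, hmin⟩ := exists_faceAt_subset (S := S) hS
    (F := {x ∈ sigmaConeCl S γ | lam x = 0})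
    ⟨0, (mem_sigmaConeCl hS hγ).2 ⟨h0, fun b hb => (mem_faceAt hS h0).2
      ⟨hγΓ hb, fun c _ => by simp [dotR]⟩⟩, map_zero lam⟩
    (fun x hx => (hcone x hx.1).1)
    (fun x hx y hy => by
      have hx1 := hcone x hx.1
      have hy1 := hcone y hy.1
      refine ⟨(mem_sigmaConeCl hS hγ).2 ⟨add_mem_nonnegOrthant hx1.1 hy1.1, ?_⟩, ?_⟩
      · rw [faceAt_add hS hx1.1 hy1.1 (hx1.2 hq) (hy1.2 hq)]
        exact subset_inter hx1.2 hy1.2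
      · rw [map_add, hx.2, hy.2, add_zero])
    (fun x hx => (hcone x hx.1).2 hq)
  have hx1 := hcone x hx
  have hε : IsFaceOf S (faceAt S x) := ⟨x, hx1.1, rfl⟩
  refine ⟨faceAt S x, ⟨hε, hx1.2⟩, ?_⟩
  ext y
  rw [mem_sigmaConeCl hS hε]
  refine ⟨fun ⟨hy, hxy⟩ => ?_, fun hy => ⟨(hcone y hy.1).1, hmin y hy⟩⟩
  have hyC : y ∈ sigmaConeCl S γ := (mem_sigmaConeCl hS hγ).2 ⟨hy, hx1.2.trans hxy⟩
  obtain ⟨hA, hI⟩ := (faceAt_subset_iff hS hx1.1 hy).1 hxy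
  obtain ⟨t, ht, hnn, hper⟩ := exists_perturb hS hx1.1 hA hI
  have hmem : x - t • y ∈ sigmaConeCl S γ := (mem_sigmaConeCl hS hγ).2 ⟨hnn, fun b hb =>
    (mem_faceAt hS hnn).2 ⟨hγΓ hb, hper b ⟨hx1.2 hb, hxy (hx1.2 hb)⟩⟩⟩
  have h1 := hlam _ hmem
  rw [map_sub, map_smul, hx0, smul_eq_mul] at h1
  exact ⟨hyC, le_antisymm (nonpos_of_mul_nonpos_right (by linarith) ht) (hlam y hyC)⟩

theorem sigmaConeCl_bijection_on_faces {n : ℕ} (hn : 1 ≤ n)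
    (S : Finset (Fin n → ℕ)) (hS : S.Nonempty) (hS0 : (0 : Fin n → ℕ) ∉ S)
    (γ : Set (Fin n → ℝ)) (hγ : IsProperFaceOf S γ) :
    Set.BijOn (sigmaConeCl S) {ε | IsFaceOf S ε ∧ γ ⊆ ε}
      {F | IsConeFaceOf (sigmaConeCl S γ) F} := by
  refine ⟨fun ε hε => isConeFaceOf_sigmaConeCl hS hγ.1 hε.1 hε.2, ?_, fun F hF =>
    exists_sigmaConeCl_eq hS hγ.1 hF⟩
  rintro ε ⟨hε, -⟩ ε' ⟨hε', -⟩ h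
  obtain ⟨e, he, heq⟩ := id hε
  obtain ⟨e', he', heq'⟩ := id hε'
  have h1 : e ∈ sigmaConeCl S ε' := h ▸ (mem_sigmaConeCl hS hε).2 ⟨he, heq.subset⟩
  have h2 : e' ∈ sigmaConeCl S ε := h ▸ (mem_sigmaConeCl hS hε').2 ⟨he', heq'.subset⟩
  exact Subset.antisymm (((mem_sigmaConeCl hS hε).1 h2).2.trans heq'.symm.subset)
    (((mem_sigmaConeCl hS hε').1 h1).2.trans heq.symm.subset)
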